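/- arXiv:0911.5686 — 2 statements merged into one kernel-verified Lean document; each statement's English description precedes it below -/
import Mathlib

section
/- Let u < v < 0, t ∈ ℝ, and let f : [u, 0] → ℝ be twice continuously differentiable. Define φ̂(λ) := ∫_u^λ (f'(ξ) + 6t) √(λ − ξ) dξ and θ(λ;u) := (1/(2√(λ−u))) ∫_u^λ f'(ξ)/√(λ−ξ) dξ. Assume the trailing-edge conditions: 6t + θ(v;u) = 0, ∫_u^v (6t + θ(λ;u)) √(λ−u) dλ = 0, and assume λ ↦ θ(λ;u) is differentiable at v. Then φ̂(v) = 0, φ̂'(v) = 0, and φ̂ is twice differentiable at v with φ̂''(v) = √(v − u) · θ'(v;u), where θ'(v;u) denotes the derivative of λ ↦ θ(λ;u) at λ = v. -/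
/-!
On `(u, 0)` the phase `φ` is a half-order integral of `k = f' + 6t`. Writing
`√(lam - ξ) = ∫_u^lam ds / (2 √(s - ξ))` (the integrand vanishes for `s < ξ` by the convention
`√x = 0` for `x < 0`) and exchanging the integrals gives `φ(lam) = ∫_u^lam H(s) ds` with
`H(s) = ∫_u^s k(ξ) / (2 √(s - ξ)) dξ = (6t + θ(s)) √(s - u)`; this is `abel_swap`.
The substitution `ξ = s - (s - u) y` shows that `H` is continuous
(`abel_rescale`, `continuous_rescaled`), so `φ' = H` on `(u, 0)`. The two trailing-edge conditions
are then `φ(v) = 0` and `H(v) = 0`, and the product rule for `(6t + θ(s)) √(s - u)` at `v`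
leaves only `√(v - u) θ'`.

Since `f` is controlled on `[u, 0]` only, the lemmas are stated for a bounded continuous `k` on `ℝ`,
obtained by extending `f'` constantly outside `[u, 0]`.
-/

/-- Holds for endpoints of any sign, as `√` is differentiable away from `0` with derivative
`1 / (2 √x)` also on the negative axis, where `√x` and `1 / (2 √x)` are both `0`. -/
lemma intervalIntegrable_inv_sqrt (a b : ℝ) :
    IntervalIntegrable (fun x : ℝ => 1 / (2 * √x)) MeasureTheory.volume a b := by
  have key : ∀ b : ℝ, IntervalIntegrable (fun x : ℝ => 1 / (2 * √x)) MeasureTheory.volume 0 b := by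
    intro b
    refine intervalIntegral.intervalIntegrable_deriv_of_nonneg (g := fun x => √x)
      Real.continuous_sqrt.continuousOn ?_ ?_
    · intro x hx
      refine Real.hasDerivAt_sqrt ?_
      rintro rfl
      rcases le_total 0 b with h | h <;> simp [h] at hx
    · intro x _
      positivity
  exact (key a).symm.trans (key b)

lemma integral_inv_sqrt (a b : ℝ) : ∫ x in a..b, 1 / (2 * √x) = √b - √a := by
  refine MeasureTheory.integral_eq_of_hasDerivAt_off_countable (fun x => √x) _
    (Set.countable_singleton (0 : ℝ)) Real.continuous_sqrt.continuousOn ?_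
    (intervalIntegrable_inv_sqrt a b)
  intro x hx
  exact Real.hasDerivAt_sqrt hx.2

lemma intervalIntegrable_abel {k : ℝ → ℝ} (hk : Continuous k) (s a b : ℝ) :
    IntervalIntegrable (fun ξ => k ξ * (1 / (2 * √(s - ξ)))) MeasureTheory.volume a b := by
  have h := (intervalIntegrable_inv_sqrt (s - a) (s - b)).comp_sub_left s
  simp only [sub_sub_cancel] at h
  exact h.continuousOn_mul hk.continuousOn

lemma abel_rescale (k : ℝ → ℝ) {u s : ℝ} (hs : u ≤ s) :
    ∫ ξ in u..s, k ξ * (1 / (2 * √(s - ξ))) =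
      √(s - u) * ∫ y in (0 : ℝ)..1, k (s - (s - u) * y) * (1 / (2 * √y)) := by
  rcases hs.eq_or_lt with rfl | hs
  · simp
  have hc : 0 < s - u := sub_pos.2 hs
  have h := intervalIntegral.integral_comp_sub_mul (a := 0) (b := 1)
    (fun ξ => k ξ * (1 / (2 * √(s - ξ)))) hc.ne' s
  simp only [mul_one, mul_zero, sub_zero, sub_sub_cancel, smul_eq_mul] at h
  rw [eq_inv_mul_iff_mul_eq₀ hc.ne'] at h
  rw [← h, ← intervalIntegral.integral_const_mul, ← intervalIntegral.integral_const_mul]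
  refine intervalIntegral.integral_congr fun y _ => ?_
  have hr : √(s - u) ≠ 0 := (Real.sqrt_pos.2 hc).ne'
  have hsq : s - u = √(s - u) * √(s - u) := (Real.mul_self_sqrt hc.le).symm
  simp only [Real.sqrt_mul hc.le]
  rw [one_div, one_div, mul_inv, mul_inv, mul_inv]
  calc _ = (√(s - u) * √(s - u)) * (k (s - (s - u) * y) * (2⁻¹ * ((√(s - u))⁻¹ * (√y)⁻¹))) := by
        rw [← hsq]
    _ = _ := by field_simp

lemma continuous_rescaled {k : ℝ → ℝ} (hk : Continuous k) {C : ℝ} (hC : ∀ x, |k x| ≤ C) (u : ℝ) :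
    Continuous fun s : ℝ =>
      √(s - u) * ∫ y in (0 : ℝ)..1, k (s - (s - u) * y) * (1 / (2 * √y)) := by
  refine Continuous.mul (by fun_prop) ?_
  refine intervalIntegral.continuous_of_dominated_interval
    (bound := fun y => C * (1 / (2 * √y))) ?_ ?_ ?_ ?_
  · intro s
    exact (Measurable.mul (by fun_prop) (by fun_prop)).aestronglyMeasurable
  · intro s
    refine Filter.Eventually.of_forall fun y _ => ?_
    have : (0 : ℝ) ≤ 1 / (2 * √y) := by positivity
    rw [Real.norm_eq_abs, abs_mul, abs_of_nonneg this]
    exact mul_le_mul_of_nonneg_right (hC _) this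
  · exact (intervalIntegrable_inv_sqrt 0 1).const_mul C
  · refine Filter.Eventually.of_forall fun y _ => ?_
    fun_prop

open MeasureTheory in
/-- Fubini for the Abel kernel; integrability on the square is that of a convolution integrand. -/
lemma abel_swap {k : ℝ → ℝ} (hk : Continuous k) {u l : ℝ} (hl : u ≤ l) :
    ∫ ξ in u..l, k ξ * √(l - ξ) = ∫ s in u..l, ∫ ξ in u..s, k ξ * (1 / (2 * √(s - ξ))) := by
  have hint : Integrable (Function.uncurry fun ξ s : ℝ => k ξ * (1 / (2 * √(s - ξ))))
      ((volume.restrict (Set.Ioc u l)).prod (volume.restrict (Set.Ioc u l))) := by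
    have hA : Integrable ((Set.Ioc u l).indicator k) volume :=
      (integrable_indicator_iff measurableSet_Ioc).2
        ((hk.integrableOn_Icc (a := u) (b := l)).mono_set Set.Ioc_subset_Icc_self)
    have hB : Integrable ((Set.Ioc (u - l) (l - u)).indicator fun x : ℝ => 1 / (2 * √x)) volume :=
      (integrable_indicator_iff measurableSet_Ioc).2
        ((intervalIntegrable_iff_integrableOn_Ioc_of_le (by linarith)).1
          (intervalIntegrable_inv_sqrt (u - l) (l - u)))
    have hconv := (hA.convolution_integrand (ContinuousLinearMap.mul ℝ ℝ) hB).swap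
    rw [Measure.prod_restrict]
    refine (hconv.integrableOn (s := Set.Ioc u l ×ˢ Set.Ioc u l)).congr_fun ?_
      (measurableSet_Ioc.prod measurableSet_Ioc)
    rintro ⟨ξ, s⟩ ⟨hξ, hs⟩
    simp only [Set.mem_Ioc] at hξ hs
    have h1 : ξ ∈ Set.Ioc u l := hξ
    have h2 : s - ξ ∈ Set.Ioc (u - l) (l - u) := ⟨by linarith, by linarith⟩
    simp [Function.uncurry, Set.indicator_of_mem h1, Set.indicator_of_mem h2]
  have hswap := integral_integral_swap hint
  simp only [← intervalIntegral.integral_of_le hl] at hswap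
  have hL : ∀ ξ ∈ Set.uIcc u l, k ξ * √(l - ξ) = ∫ s in u..l, k ξ * (1 / (2 * √(s - ξ))) := by
    intro ξ hξ
    rw [Set.uIcc_of_le hl] at hξ
    rw [intervalIntegral.integral_const_mul,
      intervalIntegral.integral_comp_sub_right (fun x => 1 / (2 * √x)) ξ, integral_inv_sqrt,
      Real.sqrt_eq_zero_of_nonpos (x := u - ξ) (by linarith [hξ.1]), sub_zero]
  have hR : ∀ s ∈ Set.uIcc u l, ∫ ξ in u..l, k ξ * (1 / (2 * √(s - ξ))) =
      ∫ ξ in u..s, k ξ * (1 / (2 * √(s - ξ))) := by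
    intro s hs
    rw [Set.uIcc_of_le hl] at hs
    rw [← intervalIntegral.integral_add_adjacent_intervals
      (intervalIntegrable_abel hk s u s) (intervalIntegrable_abel hk s s l)]
    have hz : ∫ ξ in s..l, k ξ * (1 / (2 * √(s - ξ))) = ∫ ξ in s..l, (0 : ℝ) := by
      refine intervalIntegral.integral_congr fun ξ hξ => ?_
      rw [Set.uIcc_of_le hs.2] at hξ
      simp [Real.sqrt_eq_zero_of_nonpos (x := s - ξ) (by linarith [hξ.1])]
    rw [hz, intervalIntegral.integral_zero, add_zero]
  rw [intervalIntegral.integral_congr hL, hswap, intervalIntegral.integral_congr hR]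

/-- The restriction to `(u, 0)` of `f'` extends to a bounded continuous function on `ℝ`. -/
lemma exists_extension_deriv {u : ℝ} (hu : u < 0) {f : ℝ → ℝ}
    (hf : ContDiffOn ℝ 2 f (Set.Icc u 0)) :
    ∃ g : ℝ → ℝ, Continuous g ∧ (∃ C, ∀ x, |g x| ≤ C) ∧ ∀ x ∈ Set.Ioo u 0, deriv f x = g x := by
  have hc : ContinuousOn (derivWithin f (Set.Icc u 0)) (Set.Icc u 0) :=
    hf.continuousOn_derivWithin (uniqueDiffOn_Icc hu) (by norm_num)
  obtain ⟨C, hC⟩ := isCompact_Icc.exists_bound_of_continuousOn hc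
  refine ⟨Set.IccExtend hu.le ((Set.Icc u 0).domRestrict (derivWithin f (Set.Icc u 0))),
    hc.domRestrict.Icc_extend', ⟨C, fun x => ?_⟩, fun x hx => ?_⟩
  · exact hC _ (Set.projIcc u 0 hu.le x).2
  · rw [Set.IccExtend_of_mem hu.le _ (Set.Ioo_subset_Icc_self hx), Set.domRestrict_apply,
      derivWithin_of_mem_nhds (Icc_mem_nhds hx.1 hx.2)]

theorem phase_double_zero (u v t : ℝ) (huv : u < v) (hv : v < 0)
    (f : ℝ → ℝ) (hf : ContDiffOn ℝ 2 f (Set.Icc u 0))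
    (θ φ : ℝ → ℝ)
    (hθdef : ∀ lam : ℝ, θ lam =
      1 / (2 * Real.sqrt (lam - u)) * ∫ ξ in u..lam, deriv f ξ / Real.sqrt (lam - ξ))
    (hφdef : ∀ lam : ℝ, φ lam = ∫ ξ in u..lam, (deriv f ξ + 6 * t) * Real.sqrt (lam - ξ))
    (h1 : 6 * t + θ v = 0)
    (h2 : (∫ lam in u..v, (6 * t + θ lam) * Real.sqrt (lam - u)) = 0)
    (θ' : ℝ) (hθ' : HasDerivAt θ θ' v) :
    φ v = 0 ∧ HasDerivAt φ 0 v ∧ HasDerivAt (deriv φ) (Real.sqrt (v - u) * θ') v := by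
  obtain ⟨g, hg, ⟨C, hC⟩, hfg⟩ := exists_extension_deriv (huv.trans hv) hf
  have hk : Continuous fun x => g x + 6 * t := by fun_prop
  have hkC : ∀ x, |g x + 6 * t| ≤ C + |6 * t| := fun x =>
    (abs_add_le _ _).trans (by linarith [hC x])
  -- `H` is the continuous form of `s ↦ (6t + θ s) √(s - u)`.
  obtain ⟨H, hH⟩ : ∃ H : ℝ → ℝ, H = fun s : ℝ =>
      √(s - u) * ∫ y in (0 : ℝ)..1, (g (s - (s - u) * y) + 6 * t) * (1 / (2 * √y)) := ⟨_, rfl⟩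
  have hHc : Continuous H := hH ▸ continuous_rescaled hk hkC u
  have hHabel : ∀ s, u ≤ s → ∫ ξ in u..s, (g ξ + 6 * t) * (1 / (2 * √(s - ξ))) = H s := by
    intro s hs
    rw [hH]
    exact abel_rescale (fun x => g x + 6 * t) hs
  have hφ : ∀ l ∈ Set.Ico u 0, φ l = ∫ s in u..l, H s := by
    intro l hl
    have e1 : φ l = ∫ ξ in u..l, (g ξ + 6 * t) * √(l - ξ) := by
      rw [hφdef]
      refine intervalIntegral.integral_congr_uIoo fun ξ hξ => ?_
      rw [Set.uIoo_of_le hl.1] at hξ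
      simp only [hfg ξ ⟨hξ.1, hξ.2.trans hl.2⟩]
    rw [e1, abel_swap hk hl.1]
    refine intervalIntegral.integral_congr fun s hs => ?_
    rw [Set.uIcc_of_le hl.1] at hs
    exact hHabel s hs.1
  have hθ : ∀ s ∈ Set.Ioo u 0, (6 * t + θ s) * √(s - u) = H s := by
    intro s hs
    have hr : √(s - u) ≠ 0 := (Real.sqrt_pos.2 (sub_pos.2 hs.1)).ne'
    have e1 : ∫ ξ in u..s, deriv f ξ / √(s - ξ) =
        2 * ∫ ξ in u..s, g ξ * (1 / (2 * √(s - ξ))) := by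
      rw [← intervalIntegral.integral_const_mul]
      refine intervalIntegral.integral_congr_uIoo fun ξ hξ => ?_
      rw [Set.uIoo_of_le hs.1.le] at hξ
      have : √(s - ξ) ≠ 0 := (Real.sqrt_pos.2 (sub_pos.2 hξ.2)).ne'
      simp only [hfg ξ ⟨hξ.1, hξ.2.trans hs.2⟩]
      field_simp
    have e2 : ∫ ξ in u..s, 6 * t * (1 / (2 * √(s - ξ))) = 6 * t * √(s - u) := by
      rw [intervalIntegral.integral_const_mul,
        intervalIntegral.integral_comp_sub_left (fun x => 1 / (2 * √x)) s, integral_inv_sqrt]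
      simp
    rw [← hHabel s hs.1.le, hθdef, e1]
    simp only [add_mul _ (6 * t)]
    rw [intervalIntegral.integral_add (intervalIntegrable_abel hg s u s)
      (intervalIntegrable_abel continuous_const s u s), e2]
    field_simp
    ring
  have hderiv : ∀ s ∈ Set.Ioo u 0, HasDerivAt φ (H s) s := by
    intro s hs
    refine (hHc.integral_hasStrictDerivAt u s).hasDerivAt.congr_of_eventuallyEq ?_
    filter_upwards [Ioo_mem_nhds hs.1 hs.2] with l hl
    exact hφ l ⟨hl.1.le, hl.2⟩
  have hvm : v ∈ Set.Ioo u 0 := ⟨huv, hv⟩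
  have hHv : H v = 0 := by rw [← hθ v hvm, h1, zero_mul]
  refine ⟨?_, hHv ▸ hderiv v hvm, ?_⟩
  · rw [hφ v ⟨huv.le, hv⟩, ← h2]
    refine intervalIntegral.integral_congr_uIoo fun s hs => ?_
    rw [Set.uIoo_of_le huv.le] at hs
    exact (hθ s ⟨hs.1, hs.2.trans hv⟩).symm
  · have hsq : HasDerivAt (fun s => √(s - u)) (1 / (2 * √(v - u))) v :=
      ((hasDerivAt_id v).sub_const u).sqrt (sub_pos.2 huv).ne'
    have hprod := (hθ'.const_add (6 * t)).mul hsq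
    rw [h1, zero_mul, add_zero, mul_comm θ'] at hprod
    refine hprod.congr_of_eventuallyEq ?_
    filter_upwards [Ioo_mem_nhds huv hv] with s hs
    rw [(hderiv s hs).deriv, ← hθ s hs]
    rfl
end

section
/- Let u < 0 and let g : [u, 0] → ℝ be continuously differentiable. For z ∈ ℂ ∖ [u, ∞) define G(z) = (w(z)/π) ∫_u^0 g(η)/(√(η − u)(η − z)) dη, where w(z) = exp(½ Log(u − z)) is the branch of (u − z)^{1/2} that is analytic on ℂ ∖ [u, ∞) and positive for real z < u. Then for every λ ∈ (u, 0): lim_{ε → 0⁺} (G(λ + iε) + G(λ − iε)) = 2 g(λ). -/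
open Filter Topology

/-!
Put `h η = g η / √(η - u)`, which is integrable on `(u, 0)` and differentiable at `lam`.
Subtracting the value at `lam` splits the Cauchy integral as
`∫ h η / (η - z) = ∫ (h η - h lam) / (η - z) + h lam * ∫ 1 / (η - z)`.
As `z → lam` vertically, the first term converges by dominated convergence to a number `K` that does
not depend on the side (the difference quotient of `h` at `lam` is integrable and `|η - lam| ≤ |η - z|`).
The second integral is `log (-z) - log (u - z)`, whose limits from the two sides differ only by
the sign of `π I`, since `u - z` tends to a point of the branch cut.
The prefactors tend to `∓ I √(lam - u)`, so `K` cancels in the sum and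
the two `π I` terms add up to `2 g lam`.
-/

/-- The difference quotient of `h` at `c` is bounded near `c` by differentiability, and away from
`c` it is dominated by a multiple of `|h - h c|`. -/
lemma intervalIntegrable_diffQuot {a b c : ℝ} {h : ℝ → ℝ}
    (hh : IntervalIntegrable h MeasureTheory.volume a b) (hd : DifferentiableAt ℝ h c) :
    IntervalIntegrable (fun x => (h x - h c) / (x - c)) MeasureTheory.volume a b := by
  obtain ⟨M, hM⟩ := hd.isBigO_sub.bound
  obtain ⟨δ, hδ, hball⟩ := Metric.eventually_nhds_iff.1 hM
  have hsub : IntervalIntegrable (fun x => h x - h c) MeasureTheory.volume a b :=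
    hh.sub intervalIntegrable_const
  have hbd : IntervalIntegrable (fun x => |M| + |h x - h c| / δ) MeasureTheory.volume a b :=
    intervalIntegrable_const.add (hsub.abs.div_const δ)
  refine hbd.mono_fun ?_ (MeasureTheory.ae_of_all _ fun x => ?_)
  · exact hsub.def'.aestronglyMeasurable.div₀
      (by fun_prop : Measurable fun x : ℝ => x - c).aestronglyMeasurable
  · have h0 : 0 ≤ |h x - h c| / δ := by positivity
    beta_reduce
    rw [Real.norm_eq_abs, Real.norm_eq_abs, abs_div, abs_of_nonneg (a := |M| + _) (by positivity)]
    by_cases hx : dist x c < δ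
    · have h1 := hball hx
      rw [Real.norm_eq_abs, Real.norm_eq_abs] at h1
      have h2 : |h x - h c| / |x - c| ≤ |M| := by
        refine div_le_of_le_mul₀ (abs_nonneg _) (abs_nonneg _) (h1.trans ?_)
        gcongr
        exact le_abs_self M
      linarith
    · rw [not_lt, Real.dist_eq] at hx
      have h2 : |h x - h c| / |x - c| ≤ |h x - h c| / δ := by gcongr
      linarith [abs_nonneg M]

lemma integral_inv_sub {a b : ℝ} {z : ℂ} (hz : z.im ≠ 0) :
    ∫ x in a..b, ((x : ℂ) - z)⁻¹ = Complex.log (b - z) - Complex.log (a - z) := by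
  have hne : ∀ x : ℝ, (x : ℂ) - z ∈ Complex.slitPlane := fun x => by
    right; simpa using hz
  refine intervalIntegral.integral_eq_sub_of_hasDerivAt
    (f := fun x : ℝ => Complex.log ((x : ℂ) - z)) (fun x _ => ?_) ?_
  · have h1 : HasDerivAt (fun x : ℝ => (x : ℂ) - z) 1 x :=
      (Complex.ofRealCLM.hasDerivAt (x := x)).sub_const z
    simpa using h1.clog_real (hne x)
  · refine (Continuous.inv₀ (by fun_prop) fun x => ?_).intervalIntegrable _ _
    exact Complex.slitPlane_ne_zero (hne x)

/-- One-sided boundary values of a Cauchy integral. The sign of `σ` selects the side from which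
`c` is approached, and `ℓ` is the boundary value of `log (a - z)` from that side. -/
lemma tendsto_cauchy_integral {a b c σ : ℝ} {h : ℝ → ℝ} {ℓ : ℂ} (hcb : c < b) (hσ : σ ≠ 0)
    (hh : IntervalIntegrable h MeasureTheory.volume a b) (hd : DifferentiableAt ℝ h c)
    (hℓ : Tendsto (fun ε : ℝ => Complex.log ((a : ℂ) - (c + (σ * ε : ℝ) * Complex.I)))
      (𝓝[>] 0) (𝓝 ℓ)) :
    Tendsto (fun ε : ℝ => ∫ x in a..b, (h x : ℂ) / ((x : ℂ) - (c + (σ * ε : ℝ) * Complex.I)))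
      (𝓝[>] 0)
      (𝓝 ((∫ x in a..b, (((h x - h c) / (x - c) : ℝ) : ℂ)) +
        h c * (Complex.log ((b : ℂ) - c) - ℓ))) := by
  have hz : ∀ ε : ℝ, 0 < ε → ((c : ℂ) + (σ * ε : ℝ) * Complex.I).im ≠ 0 := fun ε hε => by
    simpa using ⟨hσ, hε.ne'⟩
  have hne : ∀ ε : ℝ, 0 < ε → ∀ x : ℝ, (x : ℂ) - (c + (σ * ε : ℝ) * Complex.I) ≠ 0 :=
    fun ε hε x h0 => hz ε hε (by simpa using congrArg Complex.im h0)
  have hcont : ∀ x : ℝ, Tendsto (fun ε : ℝ => (x : ℂ) - (c + (σ * ε : ℝ) * Complex.I))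
      (𝓝[>] 0) (𝓝 ((x : ℂ) - c)) := fun x => by
    have : Continuous (fun ε : ℝ => (x : ℂ) - (c + (σ * ε : ℝ) * Complex.I)) := by fun_prop
    have h2 := this.tendsto 0
    simp only [mul_zero, Complex.ofReal_zero, zero_mul, add_zero] at h2
    exact h2.mono_left nhdsWithin_le_nhds
  have hcinv : ∀ ε : ℝ, 0 < ε →
      Continuous fun x : ℝ => ((x : ℂ) - (c + (σ * ε : ℝ) * Complex.I))⁻¹ :=
    fun ε hε => Continuous.inv₀ (by fun_prop) (hne ε hε)
  have hhC : IntervalIntegrable (fun x => ((h x - h c : ℝ) : ℂ)) MeasureTheory.volume a b := by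
    have := hh.sub (intervalIntegrable_const (c := h c))
    exact ⟨this.1.ofReal, this.2.ofReal⟩
  have hI1 : Tendsto (fun ε : ℝ => ∫ x in a..b,
      ((h x - h c : ℝ) : ℂ) * ((x : ℂ) - (c + (σ * ε : ℝ) * Complex.I))⁻¹) (𝓝[>] 0)
      (𝓝 (∫ x in a..b, (((h x - h c) / (x - c) : ℝ) : ℂ))) := by
    refine intervalIntegral.tendsto_integral_filter_of_dominated_convergence
      (fun x => |(h x - h c) / (x - c)|) ?_ ?_ (intervalIntegrable_diffQuot hh hd).abs ?_
    · filter_upwards [self_mem_nhdsWithin] with ε hε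
      exact hhC.def'.aestronglyMeasurable.mul (hcinv ε hε).aestronglyMeasurable
    · filter_upwards [self_mem_nhdsWithin] with ε hε
      refine MeasureTheory.ae_of_all _ fun x _ => ?_
      rcases eq_or_ne x c with rfl | hx
      · simp
      rw [norm_mul, Complex.norm_real, norm_inv, Real.norm_eq_abs, abs_div, div_eq_mul_inv]
      have h1 : |x - c| ≤ ‖(x : ℂ) - (c + (σ * ε : ℝ) * Complex.I)‖ := by
        simpa using Complex.abs_re_le_norm ((x : ℂ) - (c + (σ * ε : ℝ) * Complex.I))
      have h2 : 0 < |x - c| := abs_pos.2 (sub_ne_zero.2 hx)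
      gcongr
    · refine MeasureTheory.ae_of_all _ fun x _ => ?_
      rcases eq_or_ne x c with rfl | hx
      · simp
      have h3 : (x : ℂ) - c ≠ 0 := by
        rw [sub_ne_zero]; exact_mod_cast hx
      have := ((hcont x).inv₀ h3).const_mul ((h x - h c : ℝ) : ℂ)
      simpa [div_eq_mul_inv] using this
  have hlogb : Tendsto (fun ε : ℝ => Complex.log ((b : ℂ) - (c + (σ * ε : ℝ) * Complex.I)))
      (𝓝[>] 0) (𝓝 (Complex.log ((b : ℂ) - c))) :=
    (hcont b).clog (Or.inl (by simpa using hcb))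
  refine (hI1.add ((hlogb.sub hℓ).const_mul (h c : ℂ))).congr' ?_
  filter_upwards [self_mem_nhdsWithin] with ε hε
  rw [← integral_inv_sub (hz ε hε), ← intervalIntegral.integral_const_mul,
    ← intervalIntegral.integral_add]
  · refine intervalIntegral.integral_congr fun x _ => ?_
    simp only [div_eq_mul_inv]
    push_cast
    ring
  · exact hhC.mul_continuousOn (hcinv ε hε).continuousOn
  · exact ((hcinv ε hε).const_mul _).intervalIntegrable _ _

theorem G_boundary_values (u : ℝ) (hu : u < 0) (g : ℝ → ℝ)
    (hg : ContDiffOn ℝ 1 g (Set.Icc u 0))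
    (G : ℂ → ℂ)
    (hG : ∀ z : ℂ, z ∉ {w : ℂ | w.im = 0 ∧ u ≤ w.re} →
      G z = Complex.exp ((1 / 2) * Complex.log ((u : ℂ) - z)) / (Real.pi : ℂ) *
        ∫ η in u..(0 : ℝ), ((g η : ℝ) : ℂ) / ((Real.sqrt (η - u) : ℂ) * ((η : ℂ) - z))) :
    ∀ lam : ℝ, u < lam → lam < 0 →
      Tendsto (fun ε : ℝ =>
          G ((lam : ℂ) + (ε : ℂ) * Complex.I) + G ((lam : ℂ) - (ε : ℂ) * Complex.I))
        (𝓝[>] (0 : ℝ)) (𝓝 (2 * ((g lam : ℝ) : ℂ))) := by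
  intro lam hul hl0
  have hpos : 0 < lam - u := sub_pos.2 hul
  set h : ℝ → ℝ := fun η => g η / Real.sqrt (η - u) with hh_def
  have hh : IntervalIntegrable h MeasureTheory.volume u 0 := by
    have h1 : IntervalIntegrable (fun x : ℝ => (x - u) ^ (-(1 / 2) : ℝ))
        MeasureTheory.volume u 0 := by
      have := (intervalIntegral.intervalIntegrable_rpow' (a := 0) (b := 0 - u)
        (r := -(1 / 2)) (by norm_num)).comp_sub_right u
      simpa using this
    have h2 := h1.continuousOn_mul (g := g) (by
      rw [Set.uIcc_of_le hu.le]; exact hg.continuousOn)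
    refine h2.congr fun x hx => ?_
    rw [Set.uIoc_of_le hu.le] at hx
    simp only [hh_def]
    rw [Real.rpow_neg (by linarith [hx.1]), ← Real.sqrt_eq_rpow, div_eq_mul_inv]
  have hd : DifferentiableAt ℝ h lam := by
    have hgd : DifferentiableAt ℝ g lam :=
      (hg.differentiableOn one_ne_zero).differentiableAt (Icc_mem_nhds hul hl0)
    exact hgd.div ((differentiableAt_id.sub_const u).sqrt hpos.ne') (Real.sqrt_pos.2 hpos).ne'
  -- Boundary value of `G` along a vertical path, for a prescribed boundary value of the logarithm.
  have key : ∀ (σ : ℝ) (ℓ : ℂ), σ ≠ 0 →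
      Tendsto (fun ε : ℝ => Complex.log ((u : ℂ) - (lam + (σ * ε : ℝ) * Complex.I)))
        (𝓝[>] 0) (𝓝 ℓ) →
      Tendsto (fun ε : ℝ => G (lam + (σ * ε : ℝ) * Complex.I)) (𝓝[>] 0)
        (𝓝 (Complex.exp ((1 / 2) * ℓ) / (Real.pi : ℂ) *
          ((∫ x in u..0, (((h x - h lam) / (x - lam) : ℝ) : ℂ)) +
            h lam * (Complex.log (((0 : ℝ) : ℂ) - lam) - ℓ)))) := by
    intro σ ℓ hσ hℓ
    refine (((Complex.continuous_exp.tendsto _).comp (hℓ.const_mul (1 / 2))).div_const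
      (Real.pi : ℂ) |>.mul (tendsto_cauchy_integral hl0 hσ hh hd hℓ)).congr' ?_
    filter_upwards [self_mem_nhdsWithin] with ε hε
    rw [hG _ (by
      rintro ⟨h1, -⟩
      have hε' : (0 : ℝ) < ε := hε
      simp [hσ, hε'.ne'] at h1)]
    simp only [Function.comp, hh_def, Complex.ofReal_div, div_div]
  have hpath : ∀ σ : ℝ, Tendsto (fun ε : ℝ => (u : ℂ) - (lam + (σ * ε : ℝ) * Complex.I))
      (𝓝[>] 0) (𝓝 ((u : ℂ) - lam)) := fun σ => by
    have : Continuous (fun ε : ℝ => (u : ℂ) - (lam + (σ * ε : ℝ) * Complex.I)) := by fun_prop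
    have h2 := this.tendsto 0
    simp only [mul_zero, Complex.ofReal_zero, zero_mul, add_zero] at h2
    exact h2.mono_left nhdsWithin_le_nhds
  have hnorm : ‖(u : ℂ) - lam‖ = lam - u := by
    rw [← Complex.ofReal_sub, Complex.norm_real, Real.norm_eq_abs, abs_sub_comm, abs_of_pos hpos]
  have hplus : Tendsto (fun ε : ℝ => Complex.log ((u : ℂ) - (lam + ((1 : ℝ) * ε : ℝ) * Complex.I)))
      (𝓝[>] 0) (𝓝 (Real.log (lam - u) - Real.pi * Complex.I)) := by
    rw [← hnorm]
    refine (Complex.tendsto_log_nhdsWithin_im_neg_of_re_neg_of_im_zero (z := (u : ℂ) - lam)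
      (by simpa using hul) (by simp)).comp (tendsto_nhdsWithin_iff.2 ⟨hpath 1, ?_⟩)
    filter_upwards [self_mem_nhdsWithin] with ε hε
    simpa using hε
  have hminus : Tendsto
      (fun ε : ℝ => Complex.log ((u : ℂ) - (lam + ((-1 : ℝ) * ε : ℝ) * Complex.I)))
      (𝓝[>] 0) (𝓝 (Real.log (lam - u) + Real.pi * Complex.I)) := by
    rw [← hnorm]
    refine (Complex.tendsto_log_nhdsWithin_im_nonneg_of_re_neg_of_im_zero (z := (u : ℂ) - lam)
      (by simpa using hul) (by simp)).comp (tendsto_nhdsWithin_iff.2 ⟨hpath (-1), ?_⟩)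
    filter_upwards [self_mem_nhdsWithin] with ε hε
    simpa using le_of_lt hε
  have hsum := (key 1 _ one_ne_zero hplus).add (key (-1) _ (by norm_num) hminus)
  have hs : Complex.exp ((1 / 2) * (Real.log (lam - u) : ℂ)) = (Real.sqrt (lam - u) : ℂ) := by
    rw [Real.sqrt_eq_rpow, Real.rpow_def_of_pos hpos]
    push_cast
    ring_nf
  have hexp1 : Complex.exp ((1 / 2) * (Real.log (lam - u) - Real.pi * Complex.I)) =
      -(Real.sqrt (lam - u) * Complex.I) := by
    rw [mul_sub, Complex.exp_sub, hs,
      show (1 / 2 : ℂ) * (Real.pi * Complex.I) = Real.pi / 2 * Complex.I by ring,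
      Complex.exp_pi_div_two_mul_I, Complex.div_I]
  have hexp2 : Complex.exp ((1 / 2) * (Real.log (lam - u) + Real.pi * Complex.I)) =
      Real.sqrt (lam - u) * Complex.I := by
    rw [mul_add, Complex.exp_add, hs,
      show (1 / 2 : ℂ) * (Real.pi * Complex.I) = Real.pi / 2 * Complex.I by ring,
      Complex.exp_pi_div_two_mul_I]
  rw [hexp1, hexp2] at hsum
  have hgl : (g lam : ℂ) = Real.sqrt (lam - u) * h lam := by
    rw [← Complex.ofReal_mul]
    congr 1
    simp only [hh_def]
    field_simp [(Real.sqrt_pos.2 hpos).ne']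
  have hpi : (Real.pi : ℂ) ≠ 0 := Complex.ofReal_ne_zero.2 Real.pi_ne_zero
  convert hsum using 2
  · simp [sub_eq_add_neg]
  · rw [hgl]
    generalize (∫ x in u..0, (((h x - h lam) / (x - lam) : ℝ) : ℂ)) = K
    field_simp
    ring_nf
    simp only [Complex.I_sq]
    ring
end
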